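/- Let 𝓜=(M^{(λ)})_{λ>0} and 𝓝=(N^{(λ)})_{λ>0} be weight matrices. If 𝓜{⪯}𝓝, then S_{{𝓜}}(ℝ^d) ⊆ S_{{𝓝}}(ℝ^d) for every dimension d∈ℕ. Conversely, if 𝓜 and 𝓝 are standard log-convex, both satisfy conditions (12L2R) and (M2')_R, and S_{{𝓜}}(ℝ) ⊆ S_{{𝓝}}(ℝ) (dimension d=1), then 𝓜{⪯}𝓝. -/

import Mathlib

/-!
The forward inclusion is immediate: a factor `D ^ |α + β|` is absorbed into `h`.

For the converse, fix `λ`, write `M = M^{(λ)}` and `y_p = M_{p+1} / M_p`. Log-convexity says that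
`y` is nondecreasing, hence `(M_p / y_p ^ p) * y_p ^ q ≤ M_q` for all `p, q`
(`seq_mul_ratio_pow_le`). Consider the superposition of translated Gaussians
`f(x) = ∑_p 2^{-p} (M_p / y_p ^ p) exp (-(x - y_p)² / 2)`.

* All terms are positive, so `y_p ^ p * f(y_p) ≥ 2^{-p} M_p`. Thus `f ∈ S_{{N}}` forces
  `M_p ≤ C (2 h)^p N_p`, with no further construction.
* `f` belongs to `S_{{𝓜}}`. The derivatives of the Gaussian satisfy
  `|t ^ a * G^{(b)}(t)| ≤ e^{m/2} m^{m/2}` with `m = a + b` (`abs_pow_mul_gaussD_le`).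
  Splitting `|x|^a ≤ 2^a (|x - y_p|^a + y_p^a)`, one summand of `x ^ a * f^{(b)}(x)` is controlled
  by `m^{m/2} M_0` and `b^{b/2} M_a`, and (12L2R) bounds both geometrically by `M^{(κ)}_{a+b}`.

No non-quasianalyticity is involved, since no compactly supported functions are used.
-/

open Filter Asymptotics

noncomputable section

/-- Partial derivative operator in coordinate `i`. -/
def pderivOp {d : ℕ} (i : Fin d) (f : (Fin d → ℝ) → ℝ) : (Fin d → ℝ) → ℝ :=
  fun x => fderiv ℝ f x (Pi.single i 1)

/-- Iterated partial derivative `∂^β f` for a multi-index `β`. -/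
def mderiv {d : ℕ} (β : Fin d → ℕ) (f : (Fin d → ℝ) → ℝ) : (Fin d → ℝ) → ℝ :=
  (List.finRange d).foldr (fun i g => (pderivOp i)^[β i] g) f

/-- The monomial `x^α` for a multi-index `α`. -/
def mpow {d : ℕ} (x : Fin d → ℝ) (α : Fin d → ℕ) : ℝ := ∏ i, x i ^ α i

/-- The length `|α| = α 0 + ⋯ + α (d-1)` of a multi-index. -/
def msize {d : ℕ} (α : Fin d → ℕ) : ℕ := ∑ i, α i

/-- Young conjugate `φ*_ω(s) = sup_{t ≥ 0} (s·t − ω(e^t))`. -/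
def youngConj (ω : ℝ → ℝ) (s : ℝ) : ℝ :=
  sSup {y : ℝ | ∃ t : ℝ, 0 ≤ t ∧ y = s * t - ω (Real.exp t)}

/-- A general weight function: continuous, increasing, `ω:[0,∞)→[0,∞)`, with
conditions (α), (γ), (δ) (condition (β) is not required). -/
structure IsGenWeightFun (ω : ℝ → ℝ) : Prop where
  nonneg : ∀ t, 0 ≤ t → 0 ≤ ω t
  continuous : ContinuousOn ω (Set.Ici 0)
  mono : MonotoneOn ω (Set.Ici 0)
  alpha : ∃ L : ℝ, 1 ≤ L ∧ ∀ t, 0 ≤ t → ω (2 * t) ≤ L * (ω t + 1)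
  gamma : Real.log =o[Filter.atTop] ω
  delta : ConvexOn ℝ (Set.Ici 0) fun t => ω (Real.exp t)

/-- A weight function: a general weight function which moreover satisfies
(β): `ω(t) = O(t²)` as `t → ∞`. -/
structure IsWeightFun (ω : ℝ → ℝ) extends IsGenWeightFun ω : Prop where
  beta : ω =O[Filter.atTop] fun t : ℝ => t ^ 2

/-- The weight `exp((1/l)·φ*_ω(l·k))`. -/
def wWeight (ω : ℝ → ℝ) (l : ℝ) (k : ℕ) : ℝ :=
  Real.exp (1 / l * youngConj ω (l * (k : ℝ)))

/-- Roumieu Gelfand–Shilov class `S_{{ω}}(ℝ^d)`. -/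
def SRoumieuW (ω : ℝ → ℝ) (d : ℕ) : Set ((Fin d → ℝ) → ℝ) :=
  {f | ContDiff ℝ (⊤ : ℕ∞) f ∧ ∃ l > 0, ∃ C > 0, ∀ α β : Fin d → ℕ, ∀ x : Fin d → ℝ,
    |mpow x α * mderiv β f x| ≤ C * wWeight ω l (msize α + msize β)}

/-- Beurling Gelfand–Shilov class `S_{(ω)}(ℝ^d)`. -/
def SBeurlingW (ω : ℝ → ℝ) (d : ℕ) : Set ((Fin d → ℝ) → ℝ) :=
  {f | ContDiff ℝ (⊤ : ℕ∞) f ∧ ∀ l > 0, ∃ C > 0, ∀ α β : Fin d → ℕ, ∀ x : Fin d → ℝ,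
    |mpow x α * mderiv β f x| ≤ C * wWeight ω l (msize α + msize β)}

/-- Continuity of the inclusion `S_(ω)(ℝ^d) ⊆ S_(σ)(ℝ^d)`: for every `μ > 0` there are
`ν > 0` and `C ≥ 1` with `q_{σ,μ}(f) ≤ C · q_{ω,ν}(f)` for all `f ∈ S_(ω)(ℝ^d)`,
expressed via bounding constants. -/
def contIncBW (ω σ : ℝ → ℝ) (d : ℕ) : Prop :=
  ∀ μ > 0, ∃ ν > 0, ∃ C : ℝ, 1 ≤ C ∧ ∀ f ∈ SBeurlingW ω d, ∀ D : ℝ, 0 ≤ D →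
    (∀ α β : Fin d → ℕ, ∀ x : Fin d → ℝ,
      |mpow x α * mderiv β f x| ≤ D * wWeight ω ν (msize α + msize β)) →
    (∀ α β : Fin d → ℕ, ∀ x : Fin d → ℝ,
      |mpow x α * mderiv β f x| ≤ C * D * wWeight σ μ (msize α + msize β))

/-- `M ∈ LC`: normalized, log-convex, with `M_p^{1/p} → ∞`. -/
structure IsLC (M : ℕ → ℝ) : Prop where
  pos : ∀ p, 0 < M p
  norm0 : M 0 = 1
  norm1 : 1 ≤ M 1
  logConvex : ∀ p : ℕ, M (p + 1) ^ 2 ≤ M p * M (p + 2)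
  root_tendsto : Filter.Tendsto (fun p : ℕ => M p ^ (1 / (p : ℝ))) Filter.atTop Filter.atTop

/-- `M ⪯ N`: `∃ C ≥ 1, ∀ p, M_p ≤ C^p N_p`. -/
def seqPreceq (M N : ℕ → ℝ) : Prop := ∃ C : ℝ, 1 ≤ C ∧ ∀ p : ℕ, M p ≤ C ^ p * N p

/-- `M ◁ N`: `(M_p/N_p)^{1/p} → 0`. -/
def seqLtriangle (M N : ℕ → ℝ) : Prop :=
  Filter.Tendsto (fun p : ℕ => (M p / N p) ^ (1 / (p : ℝ))) Filter.atTop (nhds 0)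

/-- `‖f‖_{∞,M,h} ≤ C`, expressed pointwise. -/
def seqBound {d : ℕ} (M : ℕ → ℝ) (h C : ℝ) (f : (Fin d → ℝ) → ℝ) : Prop :=
  ∀ α β : Fin d → ℕ, ∀ x : Fin d → ℝ,
    |mpow x α * mderiv β f x| ≤ C * h ^ (msize α + msize β) * M (msize α + msize β)

/-- Roumieu class `S_{{M}}(ℝ^d)` for a single weight sequence. -/
def SRoumieuSeq (M : ℕ → ℝ) (d : ℕ) : Set ((Fin d → ℝ) → ℝ) :=
  {f | ContDiff ℝ (⊤ : ℕ∞) f ∧ ∃ C > 0, ∃ h > 0, seqBound M h C f}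

/-- Beurling class `S_(M)(ℝ^d)` for a single weight sequence. -/
def SBeurlingSeq (M : ℕ → ℝ) (d : ℕ) : Set ((Fin d → ℝ) → ℝ) :=
  {f | ContDiff ℝ (⊤ : ℕ∞) f ∧ ∀ h > 0, ∃ C > 0, seqBound M h C f}

/-- Moderate growth (M2). -/
def condM2 (M : ℕ → ℝ) : Prop := ∃ C : ℝ, 1 ≤ C ∧ ∀ p q : ℕ, M (p + q) ≤ C ^ (p + q) * M p * M q

/-- Derivation closedness (M2'). -/
def condM2' (M : ℕ → ℝ) : Prop := ∃ D : ℝ, 1 ≤ D ∧ ∀ p : ℕ, M (p + 1) ≤ D ^ (p + 1) * M p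

/-- Condition (12L2R) for a single sequence. -/
def cond12L2Rseq (M : ℕ → ℝ) : Prop :=
  ∃ B > 0, ∃ C > 0, ∃ H > 0, ∀ p q : ℕ,
    (p : ℝ) ^ ((p : ℝ) / 2) * M q ≤ B * C ^ p * H ^ (p + q) * M (p + q)

/-- Condition (12L2B) for a single sequence. -/
def cond12L2Bseq (M : ℕ → ℝ) : Prop :=
  ∃ H > 0, ∀ C > 0, ∃ B > 0, ∀ p q : ℕ,
    (p : ℝ) ^ ((p : ℝ) / 2) * M q ≤ B * C ^ p * H ^ (p + q) * M (p + q)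

/-- Non-quasianalyticity of a weight sequence: `∑ M_{p-1}/M_p < ∞`. -/
def nonQA (M : ℕ → ℝ) : Prop := Summable fun p : ℕ => M p / M (p + 1)

/-- Continuity of the inclusion `S_(M)(ℝ^d) ⊆ S_(N)(ℝ^d)` for single sequences. -/
def contIncBSeq (M N : ℕ → ℝ) (d : ℕ) : Prop :=
  ∀ h > 0, ∃ h' > 0, ∃ C : ℝ, 1 ≤ C ∧ ∀ f ∈ SBeurlingSeq M d, ∀ D : ℝ, 0 ≤ D →
    seqBound M h' D f → seqBound N h (C * D) f

/-- A weight matrix: positive normalized sequences, pointwise nondecreasing in the index. -/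
def IsWeightMatrix (M : ℝ → ℕ → ℝ) : Prop :=
  (∀ l, 0 < l → (∀ p, 0 < M l p) ∧ M l 0 = 1) ∧
    ∀ l k, 0 < l → l ≤ k → ∀ p, M l p ≤ M k p

/-- Standard log-convexity of a weight matrix. -/
def StdLogConvex (M : ℝ → ℕ → ℝ) : Prop := ∀ l, 0 < l → IsLC (M l)

/-- Roumieu class `S_{{𝓜}}(ℝ^d)` for a weight matrix. -/
def SRoumieuMat (M : ℝ → ℕ → ℝ) (d : ℕ) : Set ((Fin d → ℝ) → ℝ) :=
  {f | ∃ l > 0, f ∈ SRoumieuSeq (M l) d}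

/-- Beurling class `S_(𝓜)(ℝ^d)` for a weight matrix. -/
def SBeurlingMat (M : ℝ → ℕ → ℝ) (d : ℕ) : Set ((Fin d → ℝ) → ℝ) :=
  {f | ∀ l > 0, f ∈ SBeurlingSeq (M l) d}

/-- `𝓜{⪯}𝓝`. -/
def matPreceqR (M N : ℝ → ℕ → ℝ) : Prop := ∀ l > 0, ∃ k > 0, seqPreceq (M l) (N k)

/-- `𝓜(⪯)𝓝`. -/
def matPreceqB (M N : ℝ → ℕ → ℝ) : Prop := ∀ l > 0, ∃ k > 0, seqPreceq (M k) (N l)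

/-- `𝓜 ◁ 𝓝`. -/
def matLtriangle (M N : ℝ → ℕ → ℝ) : Prop := ∀ l > 0, ∀ k > 0, seqLtriangle (M l) (N k)

/-- Condition (12L2R) for a weight matrix (Roumieu). -/
def cond12L2RMat (M : ℝ → ℕ → ℝ) : Prop :=
  ∀ l > 0, ∃ k, l ≤ k ∧ ∃ B > 0, ∃ C > 0, ∃ H > 0, ∀ p q : ℕ,
    (p : ℝ) ^ ((p : ℝ) / 2) * M l q ≤ B * C ^ p * H ^ (p + q) * M k (p + q)

/-- Condition (M2')_R for a weight matrix (Roumieu). -/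
def condM2'RMat (M : ℝ → ℕ → ℝ) : Prop :=
  ∀ l > 0, ∃ k, l ≤ k ∧ ∃ A : ℝ, 1 ≤ A ∧ ∀ p : ℕ, M l (p + 1) ≤ A ^ (p + 1) * M k p

/-- Condition (12L2B) for a weight matrix (Beurling). -/
def cond12L2BMat (M : ℝ → ℕ → ℝ) : Prop :=
  ∀ l > 0, ∃ k, 0 < k ∧ k ≤ l ∧ ∃ H > 0, ∀ C > 0, ∃ B > 0, ∀ p q : ℕ,
    (p : ℝ) ^ ((p : ℝ) / 2) * M k q ≤ B * C ^ p * H ^ (p + q) * M l (p + q)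

/-- Condition (M2')_B for a weight matrix (Beurling). -/
def condM2'BMat (M : ℝ → ℕ → ℝ) : Prop :=
  ∀ l > 0, ∃ k, 0 < k ∧ k ≤ l ∧ ∃ A : ℝ, 1 ≤ A ∧ ∀ p : ℕ, M k (p + 1) ≤ A ^ (p + 1) * M l p

/-- Continuity of the inclusion `S_(𝓜)(ℝ^d) ⊆ S_(𝓝)(ℝ^d)` for weight matrices. -/
def contIncBMat (M N : ℝ → ℕ → ℝ) (d : ℕ) : Prop :=
  ∀ l > 0, ∀ h > 0, ∃ k > 0, ∃ h' > 0, ∃ C : ℝ, 1 ≤ C ∧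
    ∀ f ∈ SBeurlingMat M d, ∀ D : ℝ, 0 ≤ D →
      seqBound (M k) h' D f → seqBound (N l) h (C * D) f

/-- Associated function `ω_M(t) = sup_p log(t^p / M_p)`. -/
def assocFun (M : ℕ → ℝ) (t : ℝ) : ℝ :=
  sSup {y : ℝ | ∃ p : ℕ, y = Real.log (t ^ p / M p)}

/-- Condition (α) for a function. -/
def condAlpha (ω : ℝ → ℝ) : Prop := ∃ L : ℝ, 1 ≤ L ∧ ∀ t, 0 ≤ t → ω (2 * t) ≤ L * (ω t + 1)

/-- Condition (ω6): `∃ H ≥ 1, ∀ t ≥ 0, 2ω(t) ≤ ω(Ht) + H`. -/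
def condOmega6 (ω : ℝ → ℝ) : Prop := ∃ H : ℝ, 1 ≤ H ∧ ∀ t, 0 ≤ t → 2 * ω t ≤ ω (H * t) + H

/-- The sequence `W^{(λ)}_p = exp((1/λ)φ*_ω(λ p))`. -/
def wSeq (ω : ℝ → ℝ) (l : ℝ) (p : ℕ) : ℝ := Real.exp (1 / l * youngConj ω (l * (p : ℝ)))

end

/-! ### Derivatives of the Gaussian -/

/-- The `n`-th derivative of `exp (-x² / 2)`, defined through the three-term recurrence of the
Hermite polynomials. -/
noncomputable def gaussD : ℕ → ℝ → ℝ
  | 0, x => Real.exp (-x ^ 2 / 2)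
  | 1, x => -x * Real.exp (-x ^ 2 / 2)
  | (n + 2), x => -x * gaussD (n + 1) x - (n + 1) * gaussD n x

theorem hasDerivAt_gaussD (n : ℕ) (x : ℝ) : HasDerivAt (gaussD n) (gaussD (n + 1) x) x := by
  have h0 : ∀ x : ℝ, HasDerivAt (gaussD 0) (gaussD 1 x) x := by
    intro x
    have h : HasDerivAt (fun x : ℝ => -x ^ 2 / 2) (-x) x :=
      ((hasDerivAt_pow 2 x).neg.div_const 2).congr_deriv (by simp; ring)
    exact h.exp.congr_deriv (by simp only [gaussD]; ring)
  have h1 : ∀ x : ℝ, HasDerivAt (gaussD 1) (gaussD 2 x) x := by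
    intro x
    exact ((hasDerivAt_id x).neg.mul (h0 x)).congr_deriv (by simp [gaussD]; ring)
  induction n using Nat.strong_induction_on generalizing x with
  | _ n ih =>
    match n with
    | 0 => exact h0 x
    | 1 => exact h1 x
    | (n + 2) =>
      exact (((hasDerivAt_id x).neg.mul (ih (n + 1) (by omega) x)).sub
        ((ih n (by omega) x).const_mul ((n : ℝ) + 1))).congr_deriv
          (by simp [gaussD]; ring)

/-- The Hermite polynomial of degree `n ≤ m` is at most `(|x| + √m) ^ n` in absolute value. -/
theorem abs_gaussD_le (m n : ℕ) (hnm : n ≤ m) (x : ℝ) :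
    |gaussD n x| ≤ (|x| + √m) ^ n * Real.exp (-x ^ 2 / 2) := by
  induction n using Nat.strong_induction_on with
  | _ n ih =>
    have hE := Real.exp_pos (-x ^ 2 / 2)
    have hs := Real.sqrt_nonneg (m : ℝ)
    match n with
    | 0 => simp [gaussD]
    | 1 =>
      simp only [gaussD, abs_mul, abs_neg, Real.abs_exp, pow_one]
      gcongr
      linarith
    | (n + 2) =>
      have i1 := ih (n + 1) (by omega) (by omega)
      have i2 := ih n (by omega) (by omega)
      have hn : (n : ℝ) + 1 ≤ √m * √m := by
        rw [Real.mul_self_sqrt (by positivity)]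
        exact_mod_cast (by omega : n + 1 ≤ m)
      have hsx : √(m : ℝ) ≤ |x| + √m := by linarith [abs_nonneg x]
      calc |gaussD (n + 2) x| = |-x * gaussD (n + 1) x - (n + 1) * gaussD n x| := by
            simp only [gaussD]
        _ ≤ |-x * gaussD (n + 1) x| + |((n : ℝ) + 1) * gaussD n x| := abs_sub _ _
        _ = |x| * |gaussD (n + 1) x| + ((n : ℝ) + 1) * |gaussD n x| := by
            rw [abs_mul, abs_mul, abs_neg, abs_of_nonneg (by positivity : (0 : ℝ) ≤ n + 1)]
        _ ≤ |x| * ((|x| + √m) ^ (n + 1) * Real.exp (-x ^ 2 / 2)) +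
            (√m * (|x| + √m)) * ((|x| + √m) ^ n * Real.exp (-x ^ 2 / 2)) := by
            have : (n : ℝ) + 1 ≤ √m * (|x| + √m) := hn.trans (by gcongr)
            gcongr
        _ = (|x| + √m) ^ (n + 2) * Real.exp (-x ^ 2 / 2) := by ring

/-- The Gelfand–Shilov estimate of the Gaussian with respect to `m ^ (m / 2)`, `m = a + b`. -/
theorem abs_pow_mul_gaussD_le (a b : ℕ) (x : ℝ) :
    |x| ^ a * |gaussD b x| ≤
      Real.exp (1 / 2) ^ (a + b) * ((a + b : ℕ) : ℝ) ^ (((a + b : ℕ) : ℝ) / 2) := by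
  obtain ⟨m, hm⟩ : ∃ m, m = a + b := ⟨_, rfl⟩
  rw [← hm]
  have hrpow : (m : ℝ) ^ ((m : ℝ) / 2) = √m ^ m := by
    rw [Real.sqrt_eq_rpow, ← Real.rpow_natCast, ← Real.rpow_mul (by positivity)]
    congr 1; ring
  rw [hrpow]
  have hs := Real.sqrt_nonneg (m : ℝ)
  have h1 : |x| ^ a * |gaussD b x| ≤ (|x| + √m) ^ m * Real.exp (-x ^ 2 / 2) := by
    calc |x| ^ a * |gaussD b x|
        ≤ (|x| + √m) ^ a * ((|x| + √m) ^ b * Real.exp (-x ^ 2 / 2)) := by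
          gcongr
          · linarith
          · exact abs_gaussD_le m b (by omega) x
      _ = _ := by rw [hm, pow_add]; ring
  refine h1.trans ?_
  rcases Nat.eq_zero_or_pos m with h0 | hpos
  · subst h0
    simp only [pow_zero, one_mul, mul_one]
    exact Real.exp_le_one_iff.2 (by nlinarith [sq_nonneg x])
  have hsp : 0 < √(m : ℝ) := Real.sqrt_pos.2 (by exact_mod_cast hpos)
  -- With `u = |x| / √m`: `(1 + u) ^ m ≤ exp (m u)` and `m u - m u² / 2 ≤ m / 2`.
  set u := |x| / √(m : ℝ) with hu
  have hxu : |x| = √m * u := by rw [hu]; field_simp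
  have hx2 : x ^ 2 = m * u ^ 2 := by
    rw [← sq_abs, hxu, mul_pow, Real.sq_sqrt (by positivity)]
  have hu0 : 0 ≤ u := by positivity
  have h2 : (1 + u) ^ m ≤ Real.exp (m * u) := by
    rw [Real.exp_nat_mul]
    gcongr
    linarith [Real.add_one_le_exp u]
  calc (|x| + √m) ^ m * Real.exp (-x ^ 2 / 2)
      = √m ^ m * ((1 + u) ^ m * Real.exp (-x ^ 2 / 2)) := by
        rw [hxu, ← mul_assoc, ← mul_pow]; ring
    _ ≤ √m ^ m * (Real.exp (m * u) * Real.exp (-x ^ 2 / 2)) := by gcongr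
    _ ≤ √m ^ m * Real.exp (m * (1 / 2)) := by
        rw [← Real.exp_add]
        gcongr
        rw [hx2]
        have : (0 : ℝ) ≤ m := by positivity
        nlinarith [mul_nonneg this (sq_nonneg (u - 1))]
    _ = Real.exp (1 / 2) ^ m * √m ^ m := by rw [Real.exp_nat_mul]; ring

/-! ### Log-convex sequences -/

theorem IsLC.ratio_mono {M : ℕ → ℝ} (hM : IsLC M) : Monotone fun p => M (p + 1) / M p := by
  refine monotone_nat_of_le_succ fun p => ?_
  rw [div_le_div_iff₀ (hM.pos _) (hM.pos _)]
  have := hM.logConvex p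
  nlinarith

/-- The supporting-line inequality of a log-convex sequence at the index `p`. -/
theorem IsLC.seq_mul_ratio_pow_le {M : ℕ → ℝ} (hM : IsLC M) (p q : ℕ) :
    M p * (M (p + 1) / M p) ^ q ≤ M q * (M (p + 1) / M p) ^ p := by
  have hy : ∀ j, 0 < M (j + 1) / M j := fun j => div_pos (hM.pos _) (hM.pos _)
  have hstep : ∀ j, M (j + 1) = M j * (M (j + 1) / M j) := fun j => by
    field_simp [(hM.pos j).ne']
  rcases le_total p q with h | h
  · induction q, h using Nat.le_induction with
    | base => exact le_rfl
    | succ q hpq ih =>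
      have := hM.ratio_mono hpq
      simp only at this
      calc M p * (M (p + 1) / M p) ^ (q + 1)
          = (M p * (M (p + 1) / M p) ^ q) * (M (p + 1) / M p) := by ring
        _ ≤ (M q * (M (p + 1) / M p) ^ p) * (M (q + 1) / M q) := by
            have := hM.pos q
            have := hy p
            gcongr
        _ = (M q * (M (q + 1) / M q)) * (M (p + 1) / M p) ^ p := by ring
        _ = _ := by rw [← hstep]
  · induction h using Nat.decreasingInduction with
    | self => exact le_rfl
    | of_succ q hqp ih =>
      have := hM.ratio_mono hqp.le
      simp only at this
      refine le_of_mul_le_mul_right ?_ (hy p)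
      calc M p * (M (p + 1) / M p) ^ q * (M (p + 1) / M p)
          = M p * (M (p + 1) / M p) ^ (q + 1) := by ring
        _ ≤ M (q + 1) * (M (p + 1) / M p) ^ p := ih
        _ = M q * (M (p + 1) / M p) ^ p * (M (q + 1) / M q) := by
            rw [hstep q]; field_simp
        _ ≤ _ := by
            have := hM.pos q
            have := hy p
            gcongr

/-! ### The test function -/

/-- The `b`-th derivative of `∑ p, w p * exp (-(x - y p)² / 2)`, taken term by term;
`hasDerivAt_gaussSeries` justifies this when `0 ≤ w p ≤ 2⁻ᵖ`. -/
noncomputable def gaussSeries (w y : ℕ → ℝ) (b : ℕ) (x : ℝ) : ℝ := ∑' p, w p * gaussD b (x - y p)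

theorem abs_gaussD_le_const (b : ℕ) (x : ℝ) :
    |gaussD b x| ≤ Real.exp (1 / 2) ^ b * (b : ℝ) ^ ((b : ℝ) / 2) := by
  simpa using abs_pow_mul_gaussD_le 0 b x

theorem norm_gaussSeries_term_le {w : ℕ → ℝ} (hw0 : ∀ p, 0 ≤ w p) (hw : ∀ p, w p ≤ (1 / 2) ^ p)
    (b p : ℕ) (z : ℝ) :
    ‖w p * gaussD b z‖ ≤ (1 / 2) ^ p * (Real.exp (1 / 2) ^ b * (b : ℝ) ^ ((b : ℝ) / 2)) := by
  rw [Real.norm_eq_abs, abs_mul, abs_of_nonneg (hw0 p)]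
  exact mul_le_mul (hw p) (abs_gaussD_le_const b z) (abs_nonneg _) (by positivity)

theorem summable_gaussSeries {w : ℕ → ℝ} (y : ℕ → ℝ) (hw0 : ∀ p, 0 ≤ w p)
    (hw : ∀ p, w p ≤ (1 / 2) ^ p) (b : ℕ) (x : ℝ) :
    Summable fun p => w p * gaussD b (x - y p) :=
  Summable.of_norm_bounded (summable_geometric_two.mul_right _)
    fun p => norm_gaussSeries_term_le hw0 hw b p _

theorem hasDerivAt_gaussSeries {w : ℕ → ℝ} (y : ℕ → ℝ) (hw0 : ∀ p, 0 ≤ w p)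
    (hw : ∀ p, w p ≤ (1 / 2) ^ p) (b : ℕ) (x : ℝ) :
    HasDerivAt (gaussSeries w y b) (gaussSeries w y (b + 1) x) x := by
  refine hasDerivAt_tsum (summable_geometric_two.mul_right _) (g := fun p x => w p * gaussD b (x - y p))
    (g' := fun p x => w p * gaussD (b + 1) (x - y p)) (y₀ := 0) (fun p z => ?_)
    (fun p z => norm_gaussSeries_term_le hw0 hw (b + 1) p _) (summable_gaussSeries y hw0 hw b 0) x
  exact ((hasDerivAt_gaussD b (z - y p)).comp_sub_const z (y p)).const_mul (w p)

theorem deriv_gaussSeries {w : ℕ → ℝ} (y : ℕ → ℝ) (hw0 : ∀ p, 0 ≤ w p)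
    (hw : ∀ p, w p ≤ (1 / 2) ^ p) (b : ℕ) :
    deriv (gaussSeries w y b) = gaussSeries w y (b + 1) :=
  funext fun x => (hasDerivAt_gaussSeries y hw0 hw b x).deriv

theorem contDiff_gaussSeries {w : ℕ → ℝ} (y : ℕ → ℝ) (hw0 : ∀ p, 0 ≤ w p)
    (hw : ∀ p, w p ≤ (1 / 2) ^ p) : ContDiff ℝ (⊤ : ℕ∞) (gaussSeries w y 0) := by
  have h : ∀ b, iteratedDeriv b (gaussSeries w y 0) = gaussSeries w y b := by
    intro b
    induction b with
    | zero => simp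
    | succ b ih => rw [iteratedDeriv_succ, ih, deriv_gaussSeries y hw0 hw]
  refine contDiff_of_differentiable_iteratedDeriv fun b _ => ?_
  rw [h]
  exact fun x => (hasDerivAt_gaussSeries y hw0 hw b x).differentiableAt

/-- In dimension one the iterated partial derivatives are the members of a chain of derivatives. -/
theorem mderiv_fin_one {F : ℕ → ℝ → ℝ} (hF : ∀ b x, HasDerivAt (F b) (F (b + 1) x) x)
    (β : Fin 1 → ℕ) : mderiv β (fun x => F 0 (x 0)) = fun x => F (β 0) (x 0) := by
  have key : ∀ b, (pderivOp (0 : Fin 1))^[b] (fun x => F 0 (x 0)) = fun x => F b (x 0) := by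
    intro b
    induction b with
    | zero => rfl
    | succ b ih =>
      rw [Function.iterate_succ_apply', ih]
      funext x
      have h1 : HasFDerivAt (fun x : Fin 1 → ℝ => x 0)
          (ContinuousLinearMap.proj (R := ℝ) (φ := fun _ : Fin 1 => ℝ) 0) x :=
        (ContinuousLinearMap.proj (R := ℝ) (φ := fun _ : Fin 1 => ℝ) 0).hasFDerivAt
      have h2 := (hF b (x 0)).comp_hasFDerivAt x h1
      have h3 : fderiv ℝ (fun x : Fin 1 → ℝ => F b (x 0)) x = _ := h2.fderiv
      simp only [pderivOp, h3]
      simp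
  simp only [mderiv, List.finRange_succ, List.finRange_zero, List.map_nil, List.foldr_cons,
    List.foldr_nil]
  exact key (β 0)

/-- A single translated Gaussian, weighted by `c`, satisfies the estimates of the class of `K`
uniformly, provided that `c * y ^ j ≤ M j` for all `j`. -/
theorem weighted_gauss_le {M K : ℕ → ℝ} (hK : ∀ p, 0 < K p) (hM0 : M 0 = 1)
    {B C H : ℝ} (hB : 0 < B) (hC : 1 ≤ C) (hH : 0 < H)
    (h12 : ∀ p q : ℕ, (p : ℝ) ^ ((p : ℝ) / 2) * M q ≤ B * C ^ p * H ^ (p + q) * K (p + q))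
    {c y : ℝ} (hc : 0 ≤ c) (hy : 0 ≤ y) (hcy : ∀ j, c * y ^ j ≤ M j) (a b : ℕ) (x : ℝ) :
    |x| ^ a * (c * |gaussD b (x - y)|) ≤
      2 * B * (2 * Real.exp (1 / 2) * C * H) ^ (a + b) * K (a + b) := by
  obtain ⟨t, ht⟩ : ∃ t, t = x - y := ⟨_, rfl⟩
  have hx : |x| ≤ |t| + y := by
    calc |x| = |t + y| := by rw [ht]; ring_nf
      _ ≤ |t| + |y| := abs_add_le _ _
      _ = _ := by rw [abs_of_nonneg hy]
  rw [← ht]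
  have hE1 : 1 ≤ Real.exp (1 / 2) := Real.one_le_exp (by norm_num)
  have hpow : |x| ^ a ≤ 2 ^ (a + b) * (|t| ^ a + y ^ a) := by
    calc |x| ^ a ≤ (|t| + y) ^ a := by gcongr
      _ ≤ 2 ^ (a - 1) * (|t| ^ a + y ^ a) := add_pow_le (abs_nonneg _) hy a
      _ ≤ _ := by
        gcongr
        · norm_num
        · omega
  have hc1 : c ≤ 1 := by simpa [hM0] using hcy 0
  have hKp := hK (a + b)
  set E := Real.exp (1 / 2)
  set R := B * C ^ (a + b) * H ^ (a + b) * K (a + b) with hR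
  have e1 : c * (|t| ^ a * |gaussD b t|) ≤ E ^ (a + b) * R := by
    have h := h12 (a + b) 0
    rw [hM0, mul_one, add_zero] at h
    calc c * (|t| ^ a * |gaussD b t|) ≤ 1 * (|t| ^ a * |gaussD b t|) := by gcongr
      _ ≤ _ := by
        rw [one_mul]
        exact (abs_pow_mul_gaussD_le a b t).trans (by gcongr)
  have e2 : (c * y ^ a) * |gaussD b t| ≤ E ^ (a + b) * R := by
    have h := h12 b a
    have hMa : 0 ≤ M a := le_trans (by positivity) (hcy a)
    calc (c * y ^ a) * |gaussD b t| ≤ M a * (E ^ b * (b : ℝ) ^ ((b : ℝ) / 2)) := by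
          gcongr
          · exact hcy a
          · exact abs_gaussD_le_const b t
      _ = E ^ b * ((b : ℝ) ^ ((b : ℝ) / 2) * M a) := by ring
      _ ≤ E ^ b * (B * C ^ b * H ^ (a + b) * K (a + b)) := by
          rw [add_comm b a] at h
          gcongr
      _ ≤ E ^ (a + b) * R := by
          rw [hR]
          gcongr <;> first | assumption | omega
  calc |x| ^ a * (c * |gaussD b t|)
      ≤ (2 ^ (a + b) * (|t| ^ a + y ^ a)) * (c * |gaussD b t|) := by gcongr
    _ = 2 ^ (a + b) * (c * (|t| ^ a * |gaussD b t|) + (c * y ^ a) * |gaussD b t|) := by ring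
    _ ≤ 2 ^ (a + b) * (E ^ (a + b) * R + E ^ (a + b) * R) := by gcongr
    _ = _ := by rw [hR, mul_pow, mul_pow, mul_pow]; ring

/-- Membership of the superposition of Gaussians in the class of `K`, under the inequality of
(12L2R) between `M` and `K`. -/
theorem gaussSeries_mem {M K : ℕ → ℝ} (hK : ∀ p, 0 < K p) (hM0 : M 0 = 1)
    {B C H : ℝ} (hB : 0 < B) (hC : 0 < C) (hH : 0 < H)
    (h12 : ∀ p q : ℕ, (p : ℝ) ^ ((p : ℝ) / 2) * M q ≤ B * C ^ p * H ^ (p + q) * K (p + q))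
    {c y : ℕ → ℝ} (hc : ∀ p, 0 ≤ c p) (hy : ∀ p, 0 ≤ y p)
    (hcy : ∀ p j, c p * y p ^ j ≤ M j) :
    (fun x : Fin 1 → ℝ => gaussSeries (fun p => (1 / 2) ^ p * c p) y 0 (x 0)) ∈ SRoumieuSeq K 1 := by
  have hc1 : ∀ p, c p ≤ 1 := fun p => by simpa [hM0] using hcy p 0
  have hw0 : ∀ p, 0 ≤ (1 / 2 : ℝ) ^ p * c p := fun p => mul_nonneg (by positivity) (hc p)
  have hw : ∀ p, (1 / 2 : ℝ) ^ p * c p ≤ (1 / 2) ^ p := fun p =>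
    mul_le_of_le_one_right (by positivity) (hc1 p)
  have h12' : ∀ p q : ℕ, (p : ℝ) ^ ((p : ℝ) / 2) * M q ≤
      B * (max 1 C) ^ p * H ^ (p + q) * K (p + q) := fun p q =>
    (h12 p q).trans (by
      have := hK (p + q)
      gcongr
      exact le_max_right _ _)
  have hmax : 1 ≤ max 1 C := le_max_left _ _
  refine ⟨(contDiff_gaussSeries y hw0 hw).comp (contDiff_apply ℝ ℝ 0), 2 * (2 * B), by positivity,
    2 * Real.exp (1 / 2) * max 1 C * H, by positivity, fun α β x => ?_⟩
  rw [mderiv_fin_one (hasDerivAt_gaussSeries y hw0 hw) β]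
  simp only [mpow, msize, Fin.prod_univ_one, Fin.sum_univ_one, Fin.isValue]
  set D := 2 * B * (2 * Real.exp (1 / 2) * max 1 C * H) ^ (α 0 + β 0) * K (α 0 + β 0) with hD
  have hterm : ∀ p, ‖x 0 ^ α 0 * ((1 / 2) ^ p * c p * gaussD (β 0) (x 0 - y p))‖ ≤
      (1 / 2) ^ p * D := by
    intro p
    have := weighted_gauss_le hK hM0 hB hmax hH h12' (hc p) (hy p) (hcy p) (α 0) (β 0) (x 0)
    rw [Real.norm_eq_abs, abs_mul, abs_mul, abs_of_nonneg (hw0 p), abs_pow]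
    calc _ = (1 / 2) ^ p * (|x 0| ^ α 0 * (c p * |gaussD (β 0) (x 0 - y p)|)) := by ring
      _ ≤ _ := by gcongr
  have := tsum_of_norm_bounded (hasSum_geometric_two.mul_right D) hterm
  rw [tsum_mul_left, Real.norm_eq_abs] at this
  refine this.trans (le_of_eq ?_)
  rw [hD]; ring

/-- At its centre `y p`, the `p`-th Gaussian alone bounds the series from below. -/
theorem gaussSeries_zero_ge {c : ℕ → ℝ} (y : ℕ → ℝ) (hc : ∀ p, 0 ≤ c p) (hc1 : ∀ p, c p ≤ 1)
    (p : ℕ) : (1 / 2) ^ p * c p ≤ gaussSeries (fun p => (1 / 2) ^ p * c p) y 0 (y p) := by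
  have hw0 : ∀ p, 0 ≤ (1 / 2 : ℝ) ^ p * c p := fun p => mul_nonneg (by positivity) (hc p)
  have hs := summable_gaussSeries y hw0 (fun p => mul_le_of_le_one_right (by positivity) (hc1 p))
    0 (y p)
  have := hs.le_tsum p fun j _ => mul_nonneg (hw0 j) (by simp only [gaussD]; positivity)
  simpa [gaussSeries, gaussD] using this

/-- The normalization at `p = 0` allows the factor `C` to be absorbed into a `p`-th power. -/
theorem seqPreceq_of_le {M N : ℕ → ℝ} (hN : ∀ p, 0 < N p) (h0 : M 0 = N 0) {C h : ℝ}
    (hh : 0 < h) (hle : ∀ p, M p ≤ C * h ^ p * N p) : seqPreceq M N := by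
  refine ⟨max 1 C * max 1 h, one_le_mul_of_one_le_of_one_le (le_max_left _ _) (le_max_left _ _),
    fun p => ?_⟩
  rcases Nat.eq_zero_or_pos p with rfl | hp
  · simp [h0]
  have hNp := hN p
  have h1 : C ≤ max 1 C ^ p :=
    (le_max_right _ _).trans (le_self_pow₀ (le_max_left _ _) hp.ne')
  refine (hle p).trans ?_
  rw [mul_pow]
  gcongr
  exact le_max_right _ _

/-! ### The characterization of inclusion -/

/-- Theorem `Gelfand-inclusion2new`: for weight matrices `𝓜, 𝓝`,
`𝓜{⪯}𝓝` implies `S_{{𝓜}}(ℝ^d) ⊆ S_{{𝓝}}(ℝ^d)` for every `d`; conversely, if both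
matrices are standard log-convex with (12L2R) and (M2')_R and the inclusion holds
in dimension `1`, then `𝓜{⪯}𝓝`. -/
theorem roumieu_inclusion_characterization_weight_matrices (M N : ℝ → ℕ → ℝ)
    (hM : IsWeightMatrix M) (hN : IsWeightMatrix N) :
    (matPreceqR M N → ∀ d : ℕ, 0 < d → SRoumieuMat M d ⊆ SRoumieuMat N d) ∧
    (StdLogConvex M → StdLogConvex N →
      cond12L2RMat M → cond12L2RMat N → condM2'RMat M → condM2'RMat N →
      SRoumieuMat M 1 ⊆ SRoumieuMat N 1 → matPreceqR M N) := by
  constructor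
  · rintro hMN d - f ⟨l, hl, hf, C, hC, h, hh, hb⟩
    obtain ⟨k, hk, D, hD, hle⟩ := hMN l hl
    refine ⟨k, hk, hf, C, hC, h * D, by positivity, fun α β x => (hb α β x).trans ?_⟩
    rw [mul_pow, ← mul_assoc, mul_assoc (C * _)]
    gcongr
    exact hle _
  · intro hMc _ h12 _ _ _ hincl l hl
    obtain ⟨k, hlk, B, hB, C, hC, H, hH, hb⟩ := h12 l hl
    have hLC := hMc l hl
    have hk : 0 < k := lt_of_lt_of_le hl hlk
    obtain ⟨y, hy⟩ : ∃ y : ℕ → ℝ, y = fun p => M l (p + 1) / M l p := ⟨_, rfl⟩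
    have hy0 : ∀ p, 0 < y p := fun p => by rw [hy]; exact div_pos (hLC.pos _) (hLC.pos _)
    obtain ⟨c, hc⟩ : ∃ c : ℕ → ℝ, c = fun p => M l p / y p ^ p := ⟨_, rfl⟩
    have hc0 : ∀ p, 0 ≤ c p := fun p => by
      rw [hc]; exact div_nonneg (hLC.pos _).le (pow_nonneg (hy0 p).le _)
    have hcy : ∀ p j, c p * y p ^ j ≤ M l j := fun p j => by
      have h := hLC.seq_mul_ratio_pow_le p j
      have hyp := pow_pos (hy0 p) p
      simp only [hc]
      rw [div_mul_eq_mul_div, div_le_iff₀ hyp]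
      simpa only [hy] using h
    have hc1 : ∀ p, c p ≤ 1 := fun p => by simpa [hLC.norm0] using hcy p 0
    have hmem := gaussSeries_mem (hM.1 k hk).1 hLC.norm0 hB hC hH hb hc0 (fun p => (hy0 p).le) hcy
    obtain ⟨j, hj, -, D, _, h, hh, hbound⟩ := hincl ⟨k, hk, hmem⟩
    refine ⟨j, hj, seqPreceq_of_le (C := D) (hN.1 j hj).1 (by rw [hLC.norm0, (hN.1 j hj).2])
      (by positivity : 0 < 2 * h) fun p => ?_⟩
    -- Test the bound at the point `y p` with `α = p` and no derivative.
    have h1 := hbound (fun _ => p) (fun _ => 0) (fun _ => y p)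
    simp only [mpow, msize, mderiv, List.finRange_succ, List.finRange_zero, List.map_nil,
      List.foldr_cons, List.foldr_nil, Fin.prod_univ_one, Fin.sum_univ_one,
      Function.iterate_zero, id, add_zero] at h1
    have h2 := gaussSeries_zero_ge y hc0 hc1 p
    have hyp := pow_pos (hy0 p) p
    have h3 : y p ^ p * ((1 / 2) ^ p * c p) ≤ D * h ^ p * N j p :=
      (mul_le_mul_of_nonneg_left h2 hyp.le).trans ((le_abs_self _).trans h1)
    have h4 : M l p = 2 ^ p * (y p ^ p * ((1 / 2) ^ p * c p)) := by
      simp only [hc]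
      rw [one_div, inv_pow]
      field_simp
    calc M l p ≤ 2 ^ p * (D * h ^ p * N j p) := by rw [h4]; gcongr
      _ = _ := by rw [mul_pow]; ring
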